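/- arXiv:2001.10033 — 7 statements merged into one kernel-verified Lean document; each statement's English description precedes it below -/
import Mathlib

section
/- Let 𝔄 be a complex unital Banach algebra, let a ∈ 𝔄 be invertible, let s ∈ ℝ with s ≠ 0 be such that i s·1 - a is invertible, and let n ∈ ℕ with n ≥ 1. Then ‖(i s·1 - a)⁻¹ · a⁻ⁿ‖ ≤ |s|⁻ⁿ · ‖(i s·1 - a)⁻¹‖ + Σ_{k=1}^{n} |s|^{k-1-n} · ‖a⁻¹‖^k. -/
/-!
With `R = (z·1 - a)⁻¹`, `b = a⁻¹` and `z = i s`, the resolvent identity `z • (R b) = R + b`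
(`smul_inverse_sub_mul_inverse`), multiplied on the right by `bⁿ`, gives
`z • (R bⁿ⁺¹) = R bⁿ + bⁿ⁺¹`. Taking norms, `|s| ‖R bⁿ⁺¹‖ ≤ ‖R bⁿ‖ + ‖b‖ⁿ⁺¹`, and the bound
follows by induction on `n`.
-/

/-- The resolvent identity at the points `z` and `0`, cleared of the factor `z⁻¹`, so that it holds
for `z = 0` too. -/
lemma smul_inverse_sub_mul_inverse {𝔄 : Type*} [Ring 𝔄] [Algebra ℂ 𝔄] (a : 𝔄) (ha : IsUnit a)
    (z : ℂ) (hz : IsUnit (z • (1 : 𝔄) - a)) :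
    z • (Ring.inverse (z • (1 : 𝔄) - a) * Ring.inverse a)
      = Ring.inverse (z • (1 : 𝔄) - a) + Ring.inverse a := by
  have h1 := Ring.inverse_mul_cancel _ hz
  have h2 := Ring.mul_inverse_cancel _ ha
  set R := Ring.inverse (z • (1 : 𝔄) - a)
  set b := Ring.inverse a
  calc z • (R * b) = R * (z • (1 : 𝔄) - a) * b + R * (a * b) := by
        simp only [mul_sub, sub_mul, mul_smul_comm, smul_mul_assoc, mul_one, mul_assoc]
        abel
    _ = R + b := by rw [h1, h2, one_mul, mul_one, add_comm]

open Finset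

/-- In a complex unital Banach algebra, if `a` is invertible, `s ≠ 0` is real with
`i s·1 - a` invertible and `n ≥ 1`, then
`‖(i s·1 - a)⁻¹ a⁻ⁿ‖ ≤ |s|⁻ⁿ ‖(i s·1 - a)⁻¹‖ + ∑_{k=1}^n |s|^(k-1-n) ‖a⁻¹‖^k`. -/
theorem stmt_3 {𝔄 : Type*} [NormedRing 𝔄] [NormedAlgebra ℂ 𝔄] [CompleteSpace 𝔄]
    (a : 𝔄) (ha : IsUnit a) (s : ℝ) (hs : s ≠ 0)
    (hla : IsUnit ((Complex.I * (s : ℂ)) • (1 : 𝔄) - a)) (n : ℕ) (hn : 1 ≤ n) :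
    ‖Ring.inverse ((Complex.I * (s : ℂ)) • (1 : 𝔄) - a) * (Ring.inverse a) ^ n‖
      ≤ |s| ^ (-(n : ℤ)) * ‖Ring.inverse ((Complex.I * (s : ℂ)) • (1 : 𝔄) - a)‖
        + ∑ k ∈ Finset.Icc 1 n, |s| ^ ((k : ℤ) - 1 - (n : ℤ)) * ‖Ring.inverse a‖ ^ k := by
  have key := smul_inverse_sub_mul_inverse a ha _ hla
  have hz : ‖Complex.I * (s : ℂ)‖ = |s| := by simp
  have hs' : 0 < |s| := abs_pos.mpr hs
  set R := Ring.inverse ((Complex.I * (s : ℂ)) • (1 : 𝔄) - a)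
  set b := Ring.inverse a
  clear hn
  -- The bound also holds for `n = 0`, where the sum is empty, so the induction starts there.
  induction n with
  | zero => simp
  | succ n ih =>
    have hstep : |s| * ‖R * b ^ (n + 1)‖ ≤ ‖R * b ^ n‖ + ‖b‖ ^ (n + 1) := by
      rw [← hz, ← norm_smul, pow_succ', ← mul_assoc, ← smul_mul_assoc, key, add_mul, ← pow_succ']
      exact (norm_add_le _ _).trans (add_le_add_right (norm_pow_le' b n.succ_pos) _)
    -- Passing from `n` to `n + 1` lowers every exponent of `|s|` by one.
    have hexp (m : ℤ) : |s| * |s| ^ (m - 1) = |s| ^ m := by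
      rw [mul_comm, ← zpow_add_one₀ hs'.ne', sub_add_cancel]
    refine le_of_mul_le_mul_left (hstep.trans ?_) hs'
    rw [Finset.sum_Icc_succ_top (Nat.le_add_left 1 n), mul_add, mul_add, Finset.mul_sum,
      ← mul_assoc, ← mul_assoc, ← add_assoc]
    have e1 : -((n + 1 : ℕ) : ℤ) = -(n : ℤ) - 1 := by push_cast; ring
    have e2 : ((n + 1 : ℕ) : ℤ) - 1 - ((n + 1 : ℕ) : ℤ) = 0 - 1 := by ring
    have e3 (k : ℕ) : (k : ℤ) - 1 - ((n + 1 : ℕ) : ℤ) = ((k : ℤ) - 1 - n) - 1 := by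
      push_cast; ring
    rw [e1, e2, hexp, hexp, zpow_zero, one_mul]
    simp only [e3, ← mul_assoc, hexp]
    gcongr
end

section
/- Let a ∈ ℝ with a ≥ 0 and let f : ℝ → ℂ be continuously differentiable with f(0) = 0 and f(1) = 0. Then ∫₀¹ |f'(x)|² e^{a x} dx ≥ (a²/4 + π²) ∫₀¹ |f(x)|² e^{a x} dx. -/
/-!
The proof completes a square against the logarithmic derivative of the ground state
`exp (-a x / 2) * sin (π x)`, namely `s x = π cot (π x) - a / 2`. It solves the Riccati equation
`s' + s ^ 2 + a s = -(a ^ 2 / 4 + π ^ 2)`, and so on `(0, 1)`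
`(s ‖f‖² e^{a x})' = ‖f'‖² e^{a x} - (a² / 4 + π²) ‖f‖² e^{a x} - ‖f' - s f‖² e^{a x}`.
Since `f` vanishes at both endpoints, `‖f‖²` vanishes to second order there and beats the simple
pole of the cotangent, so `s ‖f‖² e^{a x}` extends continuously by zero to `[0, 1]`.
Integrating the resulting upper bound for its derivative gives the inequality.
-/

open Real

/-- At a common zero `c` of `f` and `sin (π x)`, the function `cot (π x) ‖f x‖²` (which is `0` at `c`
through division by zero) is continuous: both `‖f‖²` and `sin (π x)` vanish at `c`, with derivatives
`0` and `π cos (π c) ≠ 0`. -/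
lemma continuousAt_cot_mul_norm_sq (f : ℝ → ℂ) (c : ℝ) (hf : DifferentiableAt ℝ f c)
    (hfc : f c = 0) (hs : Real.sin (π * c) = 0) (hc : Real.cos (π * c) ≠ 0) :
    ContinuousAt (fun x => Real.cos (π * x) / Real.sin (π * x) * ‖f x‖ ^ 2) c := by
  rw [continuousAt_iff_punctured_nhds]
  have h1 : HasDerivAt (fun x => ‖f x‖ ^ 2) 0 c := by
    simpa [hfc] using hf.hasDerivAt.norm_sq
  have h2 : HasDerivAt (fun x => Real.sin (π * x)) (Real.cos (π * c) * π) c := by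
    simpa using ((hasDerivAt_id c).const_mul π).sin
  rw [hasDerivAt_iff_tendsto_slope] at h1 h2
  have h3 : Filter.Tendsto (fun x => Real.cos (π * x)) (nhdsWithin c {c}ᶜ)
      (nhds (Real.cos (π * c))) :=
    (Continuous.tendsto (by fun_prop) c).mono_left nhdsWithin_le_nhds
  have h4 := h3.mul (h1.div h2 (mul_ne_zero hc pi_ne_zero))
  simp only [hfc, hs, zero_div, mul_zero, norm_zero, div_zero, zero_mul] at h4 ⊢
  refine h4.congr' ?_
  filter_upwards [self_mem_nhdsWithin] with x hx
  have hx' : x - c ≠ 0 := sub_ne_zero.mpr hx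
  simp only [slope_def_field, hfc, hs, norm_zero, Pi.div_apply]
  rw [div_div_div_cancel_right₀ hx']
  ring

/-- Weighted Poincaré inequality: for `a ≥ 0` and a continuously differentiable
`f : ℝ → ℂ` with `f(0) = f(1) = 0`,
`∫₀¹ |f'(x)|² e^{a x} dx ≥ (a²/4 + π²) ∫₀¹ |f(x)|² e^{a x} dx`. -/
theorem stmt_6 (a : ℝ) (ha : 0 ≤ a) (f : ℝ → ℂ) (hf : ContDiff ℝ 1 f)
    (hf0 : f 0 = 0) (hf1 : f 1 = 0) :
    (∫ x in (0:ℝ)..1, ‖deriv f x‖ ^ 2 * Real.exp (a * x))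
      ≥ (a ^ 2 / 4 + π ^ 2) * ∫ x in (0:ℝ)..1, ‖f x‖ ^ 2 * Real.exp (a * x) := by
  have hd : Differentiable ℝ f := hf.differentiable one_ne_zero
  have hfc : Continuous f := hf.continuous
  have hfc' : Continuous (deriv f) := hf.continuous_deriv le_rfl
  have hsin : ∀ x ∈ Set.Ioo (0:ℝ) 1, Real.sin (π * x) ≠ 0 := fun x hx =>
    (Real.sin_pos_of_pos_of_lt_pi (mul_pos pi_pos hx.1)
      (by nlinarith [pi_pos, hx.2])).ne'
  have hcont : ContinuousOn
      (fun x => (π * (Real.cos (π * x) / Real.sin (π * x) * ‖f x‖ ^ 2) - a / 2 * ‖f x‖ ^ 2)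
        * Real.exp (a * x)) (Set.Icc 0 1) := by
    intro x hx
    apply ContinuousAt.continuousWithinAt
    have hcot : ContinuousAt (fun x => Real.cos (π * x) / Real.sin (π * x) * ‖f x‖ ^ 2) x := by
      rcases hx.1.eq_or_lt with rfl | h0
      · exact continuousAt_cot_mul_norm_sq f 0 (hd 0) hf0 (by simp) (by simp)
      rcases hx.2.eq_or_lt with rfl | h1
      · exact continuousAt_cot_mul_norm_sq f 1 (hd 1) hf1 (by simp) (by simp)
      · have hS : ContinuousAt (fun x => Real.sin (π * x)) x := by fun_prop
        have hC : ContinuousAt (fun x => Real.cos (π * x)) x := by fun_prop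
        have hN : ContinuousAt (fun x => ‖f x‖ ^ 2) x := by fun_prop
        exact (hC.div hS (hsin x ⟨h0, h1⟩)).mul hN
    fun_prop
  have hderiv : ∀ x ∈ Set.Ioo (0:ℝ) 1, HasDerivAt
      (fun x => (π * (Real.cos (π * x) / Real.sin (π * x) * ‖f x‖ ^ 2) - a / 2 * ‖f x‖ ^ 2)
        * Real.exp (a * x))
      (‖deriv f x‖ ^ 2 * Real.exp (a * x)
        - (a ^ 2 / 4 + π ^ 2) * (‖f x‖ ^ 2 * Real.exp (a * x))
        - ‖deriv f x - (π * (Real.cos (π * x) / Real.sin (π * x)) - a / 2) • f x‖ ^ 2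
          * Real.exp (a * x)) x := by
    intro x hx
    have hs := hsin x hx
    have hlin : ∀ b : ℝ, HasDerivAt (fun x => b * x) b x := fun b => by
      simpa using (hasDerivAt_id x).const_mul b
    have hn := (hd x).hasDerivAt.norm_sq
    have h := (((((hlin π).cos.div (hlin π).sin hs).mul hn).const_mul π).sub
      (hn.const_mul (a / 2))).mul (hlin a).exp
    refine h.congr_deriv ?_
    rw [norm_sub_sq_real, real_inner_smul_right, norm_smul, mul_pow, Real.norm_eq_abs, sq_abs,
      real_inner_comm (f x) (deriv f x)]
    simp only [Pi.div_apply, Pi.mul_apply, Pi.sub_apply]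
    have hcs := Real.sin_sq_add_cos_sq (π * x)
    generalize Real.sin (π * x) = S at *
    generalize Real.cos (π * x) = C at *
    have hq : (-S * π * S - C * (C * π)) / S ^ 2 = -π * (1 + (C / S) ^ 2) := by
      field_simp
      ring
    rw [hq]
    ring
  have key := intervalIntegral.sub_le_integral_of_hasDeriv_right_of_le zero_le_one hcont
    (fun x hx => (hderiv x hx).hasDerivWithinAt)
    (φ := fun x => ‖deriv f x‖ ^ 2 * Real.exp (a * x)
        - (a ^ 2 / 4 + π ^ 2) * (‖f x‖ ^ 2 * Real.exp (a * x)))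
    (Continuous.integrableOn_Icc (by fun_prop))
    (fun x _ => sub_le_self _ (by positivity))
  rw [intervalIntegral.integral_sub (Continuous.intervalIntegrable (by fun_prop) _ _)
    (Continuous.intervalIntegrable (by fun_prop) _ _),
    intervalIntegral.integral_const_mul] at key
  simp only [hf0, hf1, norm_zero] at key
  norm_num at key
  linarith
end

section
/- Let a, b > 0 and let w : ℝ × ℝ → ℂ be continuously differentiable such that w vanishes on the boundary of the rectangle [0,a] × [0,b]. Then ∫₀^a ∫₀^b ( |∂w/∂x(x,y)|² + |∂w/∂y(x,y)|² ) dy dx ≥ π² (1/a² + 1/b²) ∫₀^a ∫₀^b |w(x,y)|² dy dx. -/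
open Real

/-!
The Poincaré inequality on the rectangle follows from the one-dimensional Wirtinger inequality
`(π / a)² ∫₀ᵃ |f|² ≤ ∫₀ᵃ |f'|²` for `C¹` functions with `f 0 = f a = 0` (`wirtinger`), applied to
the horizontal and to the vertical slices of `w`, integrated over the other variable and added;
Fubini's theorem puts the horizontal contribution in the required order of integration.

Wirtinger's inequality is proved by Jacobi's method. For `0 < k < π / a`, the function
`T x = k tan (k (x - a / 2))` is smooth on `[0, a]` and satisfies the Riccati equation
`T' = k² + T²`, so that `|f'|² - k² |f|² = |f' + T f|² - (T |f|²)'`. The last term integrates to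
zero because `f` vanishes at both ends (`wirtinger_aux`). Letting `k` tend to `π / a` gives the
optimal constant.
-/

/-- Wirtinger's inequality with a constant `k` strictly below the optimal one, for which the
Riccati solution `k tan (k (x - a / 2))` has no singularity on the closed interval `[0, a]`. -/
lemma wirtinger_aux {a k : ℝ} (ha : 0 < a) (hk : 0 < k) (hka : k * a < π) {f : ℝ → ℂ}
    (hf : ContDiff ℝ 1 f) (h0 : f 0 = 0) (h1 : f a = 0) :
    k ^ 2 * ∫ x in (0:ℝ)..a, ‖f x‖ ^ 2 ≤ ∫ x in (0:ℝ)..a, ‖deriv f x‖ ^ 2 := by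
  have hfc : Continuous f := hf.continuous
  have hdc : Continuous (deriv f) := hf.continuous_deriv le_rfl
  have hcos : ∀ x ∈ Set.uIcc 0 a, cos (k * (x - a / 2)) ≠ 0 := by
    intro x hx
    rw [Set.uIcc_of_le ha.le] at hx
    refine (cos_pos_of_mem_Ioo ⟨?_, ?_⟩).ne' <;> nlinarith [hx.1, hx.2]
  set T : ℝ → ℝ := fun x => k * tan (k * (x - a / 2)) with hT
  have hTc : ContinuousOn T (Set.uIcc 0 a) := by
    refine continuousOn_const.mul ?_
    exact continuousOn_tan.comp (by fun_prop) hcos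
  have hTd : ∀ x ∈ Set.uIcc 0 a, HasDerivAt T (k ^ 2 + T x ^ 2) x := by
    intro x hx
    have hlin : HasDerivAt (fun x : ℝ => k * (x - a / 2)) (k * 1) x :=
      ((hasDerivAt_id x).sub_const _).const_mul k
    have h := ((hasDerivAt_tan (hcos x hx)).comp x hlin).const_mul k
    refine h.congr_deriv ?_
    have hc := hcos x hx
    have hs := sin_sq_add_cos_sq (k * (x - a / 2))
    simp only [hT, tan_eq_sin_div_cos]
    generalize k * (x - a / 2) = θ at hc hs ⊢
    field_simp
    linear_combination -hs
  set G' : ℝ → ℝ := fun x =>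
    (k ^ 2 + T x ^ 2) * ‖f x‖ ^ 2 + T x * (2 * inner ℝ (f x) (deriv f x)) with hG'
  have hGd : ∀ x ∈ Set.uIcc 0 a, HasDerivAt (fun x => T x * ‖f x‖ ^ 2) (G' x) x := by
    intro x hx
    exact (hTd x hx).mul ((hf.differentiable one_ne_zero x).hasDerivAt.norm_sq)
  have hGc : ContinuousOn G' (Set.uIcc 0 a) := by
    have : Continuous fun x => inner ℝ (f x) (deriv f x) := hfc.inner hdc
    fun_prop
  have hint : ∫ x in (0:ℝ)..a, G' x = 0 := by
    rw [intervalIntegral.integral_eq_sub_of_hasDerivAt hGd hGc.intervalIntegrable]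
    simp [h0, h1]
  have hi1 : IntervalIntegrable (fun x => k ^ 2 * ‖f x‖ ^ 2) MeasureTheory.volume 0 a :=
    Continuous.intervalIntegrable (by fun_prop) _ _
  have hi2 : IntervalIntegrable (fun x => ‖deriv f x‖ ^ 2) MeasureTheory.volume 0 a :=
    Continuous.intervalIntegrable (by fun_prop) _ _
  have key : ∫ x in (0:ℝ)..a, (k ^ 2 * ‖f x‖ ^ 2 - G' x) ≤ ∫ x in (0:ℝ)..a, ‖deriv f x‖ ^ 2 := by
    refine intervalIntegral.integral_mono_on ha.le (hi1.sub hGc.intervalIntegrable) hi2 ?_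
    intro x _
    -- The difference of the two sides is `‖f' + T f‖²`.
    have h := norm_add_sq_real (deriv f x) (T x • f x)
    rw [norm_smul, inner_smul_right, real_inner_comm, mul_pow, Real.norm_eq_abs, sq_abs] at h
    have := sq_nonneg ‖deriv f x + T x • f x‖
    simp only [hG']
    linarith
  rw [intervalIntegral.integral_sub hi1 hGc.intervalIntegrable, hint,
    intervalIntegral.integral_const_mul, sub_zero] at key
  exact key

/-- Wirtinger's inequality with the optimal constant. -/
lemma wirtinger {a : ℝ} (ha : 0 < a) {f : ℝ → ℂ}
    (hf : ContDiff ℝ 1 f) (h0 : f 0 = 0) (h1 : f a = 0) :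
    (π / a) ^ 2 * ∫ x in (0:ℝ)..a, ‖f x‖ ^ 2 ≤ ∫ x in (0:ℝ)..a, ‖deriv f x‖ ^ 2 := by
  have hpa : 0 < π / a := by positivity
  have hlim : Filter.Tendsto (fun k : ℝ => k ^ 2 * ∫ x in (0:ℝ)..a, ‖f x‖ ^ 2)
      (nhdsWithin (π / a) (Set.Iio (π / a)))
      (nhds ((π / a) ^ 2 * ∫ x in (0:ℝ)..a, ‖f x‖ ^ 2)) :=
    (Continuous.tendsto (by fun_prop) _).mono_left nhdsWithin_le_nhds
  refine le_of_tendsto hlim ?_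
  filter_upwards [Ioo_mem_nhdsLT hpa] with k hk
  exact wirtinger_aux ha hk.1 ((lt_div_iff₀ ha).1 hk.2) hf h0 h1

/-- Poincaré inequality on the rectangle `(0,a) × (0,b)` with the optimal constant:
if `w : ℝ × ℝ → ℂ` is continuously differentiable and vanishes on the boundary of
`[0,a] × [0,b]`, then
`∫₀ᵃ∫₀ᵇ (|∂w/∂x|² + |∂w/∂y|²) dy dx ≥ π²(1/a² + 1/b²) ∫₀ᵃ∫₀ᵇ |w|² dy dx`. -/
theorem stmt_8 (a b : ℝ) (ha : 0 < a) (hb : 0 < b) (w : ℝ × ℝ → ℂ)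
    (hw : ContDiff ℝ 1 w)
    (hbd : ∀ x y : ℝ, x ∈ Set.Icc 0 a → y ∈ Set.Icc 0 b →
        (x = 0 ∨ x = a ∨ y = 0 ∨ y = b) → w (x, y) = 0) :
    (∫ x in (0:ℝ)..a, ∫ y in (0:ℝ)..b,
        (‖deriv (fun t => w (t, y)) x‖ ^ 2 + ‖deriv (fun t => w (x, t)) y‖ ^ 2))
      ≥ π ^ 2 * (1 / a ^ 2 + 1 / b ^ 2)
        * ∫ x in (0:ℝ)..a, ∫ y in (0:ℝ)..b, ‖w (x, y)‖ ^ 2 := by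
  have hwc : Continuous w := hw.continuous
  have hfd : Continuous (fderiv ℝ w) := hw.continuous_fderiv one_ne_zero
  have hwd : Differentiable ℝ w := hw.differentiable one_ne_zero
  -- The partial derivatives are values of the Fréchet derivative, hence jointly continuous.
  have hd1 : ∀ x y : ℝ, deriv (fun t => w (t, y)) x = fderiv ℝ w (x, y) (1, 0) := fun x y =>
    ((hwd (x, y)).hasFDerivAt.comp_hasDerivAt x
      ((hasDerivAt_id x).prodMk (hasDerivAt_const x y))).deriv
  have hd2 : ∀ x y : ℝ, deriv (fun t => w (x, t)) y = fderiv ℝ w (x, y) (0, 1) := fun x y =>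
    ((hwd (x, y)).hasFDerivAt.comp_hasDerivAt y
      ((hasDerivAt_const y x).prodMk (hasDerivAt_id y))).deriv
  have hc0 : Continuous fun p : ℝ × ℝ => ‖w p‖ ^ 2 := by fun_prop
  have hc1 : Continuous fun p : ℝ × ℝ => ‖deriv (fun t => w (t, p.2)) p.1‖ ^ 2 := by
    simp only [hd1]; fun_prop
  have hc2 : Continuous fun p : ℝ × ℝ => ‖deriv (fun t => w (p.1, t)) p.2‖ ^ 2 := by
    simp only [hd2]; fun_prop
  have hI : ∀ {F : ℝ × ℝ → ℝ}, Continuous F → ∀ c : ℝ,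
      Continuous fun x => ∫ y in (0:ℝ)..c, F (x, y) := fun hF c =>
    intervalIntegral.continuous_parametric_intervalIntegral_of_continuous' (by exact hF) 0 c
  have hswap : ∀ {F : ℝ × ℝ → ℝ}, Continuous F →
      ∫ x in (0:ℝ)..a, ∫ y in (0:ℝ)..b, F (x, y) =
        ∫ y in (0:ℝ)..b, ∫ x in (0:ℝ)..a, F (x, y) := by
    intro F hF
    refine MeasureTheory.intervalIntegral_intervalIntegral_swap (F := fun x y => F (x, y)) ?_
    exact (hF.continuousOn.integrableOn_compact (isCompact_uIcc.prod isCompact_uIcc)).mono_set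
      (Set.prod_mono Set.uIoc_subset_uIcc Set.uIoc_subset_uIcc)
  have hA : (π / a) ^ 2 * ∫ x in (0:ℝ)..a, ∫ y in (0:ℝ)..b, ‖w (x, y)‖ ^ 2 ≤
      ∫ x in (0:ℝ)..a, ∫ y in (0:ℝ)..b, ‖deriv (fun t => w (t, y)) x‖ ^ 2 := by
    rw [hswap hc0, hswap hc1, ← intervalIntegral.integral_const_mul]
    refine intervalIntegral.integral_mono_on hb.le
      ((continuous_const.mul (hI (hc0.comp continuous_swap) a)).intervalIntegrable _ _)
      ((hI (hc1.comp continuous_swap) a).intervalIntegrable _ _) fun y hy => ?_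
    exact wirtinger ha (hw.comp (contDiff_id.prodMk contDiff_const))
      (hbd 0 y ⟨le_rfl, ha.le⟩ hy (by simp)) (hbd a y ⟨ha.le, le_rfl⟩ hy (by simp))
  have hB : (π / b) ^ 2 * ∫ x in (0:ℝ)..a, ∫ y in (0:ℝ)..b, ‖w (x, y)‖ ^ 2 ≤
      ∫ x in (0:ℝ)..a, ∫ y in (0:ℝ)..b, ‖deriv (fun t => w (x, t)) y‖ ^ 2 := by
    rw [← intervalIntegral.integral_const_mul]
    refine intervalIntegral.integral_mono_on ha.le
      ((continuous_const.mul (hI hc0 b)).intervalIntegrable _ _)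
      ((hI hc2 b).intervalIntegrable _ _) fun x hx => ?_
    exact wirtinger hb (hw.comp (contDiff_const.prodMk contDiff_id))
      (hbd x 0 hx ⟨le_rfl, hb.le⟩ (by simp)) (hbd x b hx ⟨hb.le, le_rfl⟩ (by simp))
  have hsum : (∫ x in (0:ℝ)..a, ∫ y in (0:ℝ)..b,
        (‖deriv (fun t => w (t, y)) x‖ ^ 2 + ‖deriv (fun t => w (x, t)) y‖ ^ 2)) =
      (∫ x in (0:ℝ)..a, ∫ y in (0:ℝ)..b, ‖deriv (fun t => w (t, y)) x‖ ^ 2) +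
      ∫ x in (0:ℝ)..a, ∫ y in (0:ℝ)..b, ‖deriv (fun t => w (x, t)) y‖ ^ 2 := by
    rw [← intervalIntegral.integral_add ((hI hc1 b).intervalIntegrable _ _)
      ((hI hc2 b).intervalIntegrable _ _)]
    refine intervalIntegral.integral_congr fun x _ => ?_
    exact intervalIntegral.integral_add
      ((hc1.comp (Continuous.prodMk_right x)).intervalIntegrable _ _)
      ((hc2.comp (Continuous.prodMk_right x)).intervalIntegrable _ _)
  rw [hsum, show π ^ 2 * (1 / a ^ 2 + 1 / b ^ 2) = (π / a) ^ 2 + (π / b) ^ 2 by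
    rw [div_pow, div_pow]; ring, add_mul]
  exact add_le_add hA hB
end

section
/- Let a ∈ ℝ with a ≥ 0. Then the sequence n ↦ √(a²/4 + π² n²) · ∫₀¹ e^{a x/2} sin(π n x) (1 - x) dx converges to 1 as n → ∞. -/
/-!
Write `f x = e^{ax/2} (1 - x)` and `ω = π n`, so that `sin ω = 0`, `f 0 = 1` and `f 1 = 0`.
Two integrations by parts give `ω ∫₀¹ f x sin (ω x) dx = 1 - ω⁻¹ ∫₀¹ f'' x sin (ω x) dx`
(`mul_integral_eq`), where the boundary term `1` is `f 0`. Since `f''` is bounded on `[0, 1]`,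
the last term is `O(1/ω)`, so the left side tends to `1` (`tendsto_mul_integral`). It remains to
replace the factor `ω` by `√(a²/4 + ω²)`, which is asymptotically equivalent to it
(`tendsto_sqrt_div`).
-/

open Real Filter

/-- The formula obtained by integrating by parts twice, with `f x = e^{ax/2} (1 - x)`; the weight
on the right is `f''`. -/
lemma mul_integral_eq (a ω : ℝ) (hω : ω ≠ 0) (hs : Real.sin ω = 0) :
    ω * (∫ x in (0:ℝ)..1, Real.exp (a * x / 2) * Real.sin (ω * x) * (1 - x)) =
      1 - ω⁻¹ * ∫ x in (0:ℝ)..1,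
        Real.exp (a * x / 2) * (a ^ 2 / 4 * (1 - x) - a) * Real.sin (ω * x) := by
  -- `-f cos (ω x) / ω + f' sin (ω x) / ω²` is a primitive of `f sin (ω x) + f'' sin (ω x) / ω²`.
  have hG : ∀ x : ℝ, HasDerivAt
      (fun x => -(Real.exp (a * x / 2) * (1 - x) * Real.cos (ω * x)) / ω
        + Real.exp (a * x / 2) * (a / 2 * (1 - x) - 1) * Real.sin (ω * x) / ω ^ 2)
      (Real.exp (a * x / 2) * Real.sin (ω * x) * (1 - x)
        + ω⁻¹ ^ 2 * (Real.exp (a * x / 2) * (a ^ 2 / 4 * (1 - x) - a) * Real.sin (ω * x))) x := by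
    intro x
    have he : HasDerivAt (fun x => Real.exp (a * x / 2)) (Real.exp (a * x / 2) * (a * 1 / 2)) x :=
      (((hasDerivAt_id' x).const_mul a).div_const 2).exp
    have hl : HasDerivAt (fun x : ℝ => 1 - x) (-1) x := (hasDerivAt_id' x).const_sub 1
    have hw : HasDerivAt (fun x : ℝ => ω * x) (ω * 1) x := (hasDerivAt_id' x).const_mul ω
    refine ((((he.mul hl).mul hw.cos).neg.div_const ω).add
      (((he.mul ((hl.const_mul (a / 2)).sub_const 1)).mul hw.sin).div_const (ω ^ 2))).congr_deriv ?_
    simp only [Pi.mul_apply]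
    field_simp
    ring
  have hi : ∀ g : ℝ → ℝ, Continuous g → IntervalIntegrable g MeasureTheory.volume 0 1 :=
    fun g hg => hg.intervalIntegrable _ _
  have h := intervalIntegral.integral_eq_sub_of_hasDerivAt (a := 0) (b := 1)
    (fun x _ => hG x) (hi _ (by fun_prop))
  rw [intervalIntegral.integral_add (hi _ (by fun_prop)) (hi _ (by fun_prop)),
    intervalIntegral.integral_const_mul] at h
  simp only [mul_one, mul_zero, hs, sub_self, sub_zero, zero_div, Real.exp_zero, Real.cos_zero,
    Real.sin_zero, zero_mul, neg_zero, add_zero, one_mul, zero_sub] at h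
  rw [eq_sub_of_add_eq h]
  field_simp

lemma tendsto_mul_integral (a : ℝ) :
    Tendsto (fun n : ℕ => (π * n)
        * ∫ x in (0:ℝ)..1, Real.exp (a * x / 2) * Real.sin (π * n * x) * (1 - x))
      atTop (nhds 1) := by
  obtain ⟨C, hC⟩ := (isCompact_Icc (a := (0:ℝ)) (b := 1)).exists_bound_of_continuousOn
    (f := fun x => Real.exp (a * x / 2) * (a ^ 2 / 4 * (1 - x) - a))
    (Continuous.continuousOn (by fun_prop))
  have hinv : Tendsto (fun n : ℕ => (π * n)⁻¹) atTop (nhds 0) :=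
    (tendsto_natCast_atTop_atTop.const_mul_atTop Real.pi_pos).inv_tendsto_atTop
  have hb : ∀ n : ℕ, ‖∫ x in (0:ℝ)..1,
      Real.exp (a * x / 2) * (a ^ 2 / 4 * (1 - x) - a) * Real.sin (π * n * x)‖ ≤ C := by
    intro n
    have := intervalIntegral.norm_integral_le_of_norm_le_const (a := 0) (b := 1) (C := C)
      (f := fun x => Real.exp (a * x / 2) * (a ^ 2 / 4 * (1 - x) - a) * Real.sin (π * n * x)) ?_
    · simpa using this
    · intro x hx
      rw [Set.uIoc_of_le zero_le_one] at hx
      rw [norm_mul]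
      exact (mul_le_of_le_one_right (norm_nonneg _) (Real.abs_sin_le_one _)).trans
        (hC x ⟨hx.1.le, hx.2⟩)
  have h0 : Tendsto (fun n : ℕ => (π * n)⁻¹ * ∫ x in (0:ℝ)..1,
      Real.exp (a * x / 2) * (a ^ 2 / 4 * (1 - x) - a) * Real.sin (π * n * x))
      atTop (nhds 0) :=
    hinv.zero_mul_isBoundedUnder_le (isBoundedUnder_of ⟨C, hb⟩)
  have h1 := h0.const_sub 1
  rw [sub_zero] at h1
  refine h1.congr' ?_
  filter_upwards [eventually_gt_atTop 0] with n hn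
  have hn' : (n : ℝ) ≠ 0 := by exact_mod_cast hn.ne'
  refine (mul_integral_eq a (π * n) (mul_ne_zero Real.pi_ne_zero hn') ?_).symm
  rw [mul_comm]
  exact Real.sin_nat_mul_pi n

lemma tendsto_sqrt_div (a : ℝ) :
    Tendsto (fun n : ℕ => Real.sqrt (a ^ 2 / 4 + π ^ 2 * n ^ 2) / (π * n)) atTop (nhds 1) := by
  have hinv : Tendsto (fun n : ℕ => (π * n)⁻¹) atTop (nhds 0) :=
    (tendsto_natCast_atTop_atTop.const_mul_atTop Real.pi_pos).inv_tendsto_atTop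
  have h := (((hinv.pow 2).const_mul (a ^ 2 / 4)).add_const 1).sqrt
  norm_num at h
  refine h.congr' ?_
  filter_upwards [eventually_gt_atTop 0] with n hn
  have hn' : (0 : ℝ) < n := by exact_mod_cast hn
  have hω : 0 < π * n := mul_pos Real.pi_pos hn'
  rw [eq_div_iff hω.ne']
  nth_rewrite 1 [← Real.sqrt_sq hω.le]
  rw [← Real.sqrt_mul' _ (sq_nonneg _)]
  congr 1
  field_simp

/-- The sequence `n ↦ √(a²/4 + π²n²) ∫₀¹ e^{ax/2} sin(πnx)(1-x) dx` converges to `1`. -/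
theorem stmt_10 (a : ℝ) (ha : 0 ≤ a) :
    Tendsto (fun n : ℕ => Real.sqrt (a ^ 2 / 4 + π ^ 2 * n ^ 2)
        * ∫ x in (0:ℝ)..1, Real.exp (a * x / 2) * Real.sin (π * n * x) * (1 - x))
      atTop (nhds 1) := by
  have h := (tendsto_sqrt_div a).mul (tendsto_mul_integral a)
  rw [one_mul] at h
  refine h.congr' ?_
  filter_upwards [eventually_gt_atTop 0] with n hn
  have hn' : (n : ℝ) ≠ 0 := by exact_mod_cast hn.ne'
  rw [← mul_assoc, div_mul_cancel₀ _ (mul_ne_zero Real.pi_ne_zero hn')]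
end

section
/- Let a ∈ ℝ with a ≥ 0. Then there exist a constant c > 0 and N ∈ ℕ such that for all integers n ≥ N, ∫₀¹ e^{a x/2} sin(π n x) (1 - x) dx ≥ c / √(a²/4 + π² n²). -/
/-!
Write `b = a / 2`, `w = π n` and `D = b² + w²`. The integrand is the imaginary part of
`(1 - x) e ^ (s x)` with `s = b + i w`, whose primitive is `(1 - x) e ^ (s x) / s + e ^ (s x) / s²`.
As `sin w = 0`, the integral equals `w / D + 2 b w (1 - e ^ b cos w) / D²`
(`integral_exp_sin_mul_one_sub`). For large `n` the second term is at most half of the first in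
absolute value, and `√D ≤ 2 w`, so the integral is at least `w / (2 D) ≥ (1 / 4) / √D`.
-/

open Real

theorem integral_exp_sin_mul_one_sub (b w : ℝ) (hw : 0 < w) (hs : Real.sin w = 0) :
    (∫ x in (0:ℝ)..1, Real.exp (b * x) * Real.sin (w * x) * (1 - x)) =
      w / (b ^ 2 + w ^ 2) + 2 * b * w * (1 - Real.exp b * Real.cos w) / (b ^ 2 + w ^ 2) ^ 2 := by
  have hD : b ^ 2 + w ^ 2 ≠ 0 := by positivity
  -- The imaginary part of `(1 - x) e ^ (s x) / s + e ^ (s x) / s²`, where `s = b + i w`.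
  have key : ∀ x ∈ Set.uIcc (0:ℝ) 1, HasDerivAt (fun x : ℝ => Real.exp (b * x) *
      ((1 - x) * (b * Real.sin (w * x) - w * Real.cos (w * x)) / (b ^ 2 + w ^ 2) +
        ((b ^ 2 - w ^ 2) * Real.sin (w * x) - 2 * b * w * Real.cos (w * x))
          / (b ^ 2 + w ^ 2) ^ 2))
      (Real.exp (b * x) * Real.sin (w * x) * (1 - x)) x := by
    intro x _
    have lin : ∀ k : ℝ, HasDerivAt (fun x : ℝ => k * x) k x := fun k => by
      simpa using (hasDerivAt_id x).const_mul k
    have hsin := (lin w).sin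
    have hcos := (lin w).cos
    have h1 : HasDerivAt (fun x : ℝ => 1 - x) (-1) x := by
      simpa using (hasDerivAt_id x).const_sub 1
    have := (lin b).exp.mul
      (((h1.mul ((hsin.const_mul b).sub (hcos.const_mul w))).div_const (b ^ 2 + w ^ 2)).add
        (((hsin.const_mul (b ^ 2 - w ^ 2)).sub (hcos.const_mul (2 * b * w))).div_const
          ((b ^ 2 + w ^ 2) ^ 2)))
    refine this.congr_deriv ?_
    simp only [Pi.add_apply, Pi.sub_apply, Pi.mul_apply]
    field_simp
    ring
  rw [intervalIntegral.integral_eq_sub_of_hasDerivAt key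
    (Continuous.intervalIntegrable (by fun_prop) _ _)]
  simp only [mul_one, mul_zero, hs, Real.sin_zero, Real.cos_zero, Real.exp_zero]
  field_simp
  ring

/-- Observability lower bound: there exist `c > 0` and `N ∈ ℕ` such that for all `n ≥ N`,
`∫₀¹ e^{ax/2} sin(πnx)(1-x) dx ≥ c / √(a²/4 + π²n²)`. -/
theorem stmt_11 (a : ℝ) (ha : 0 ≤ a) :
    ∃ c : ℝ, 0 < c ∧ ∃ N : ℕ, ∀ n : ℕ, N ≤ n →
      (∫ x in (0:ℝ)..1, Real.exp (a * x / 2) * Real.sin (π * n * x) * (1 - x))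
        ≥ c / Real.sqrt (a ^ 2 / 4 + π ^ 2 * n ^ 2) := by
  obtain ⟨b, rfl⟩ : ∃ b, a = 2 * b := ⟨a / 2, by ring⟩
  have hb : 0 ≤ b := by linarith
  have hbe : 0 ≤ b * Real.exp b := by positivity
  -- This threshold gives `w ≥ 1`, `w ≥ b` and `w² ≥ w ≥ 4 b e ^ b` for `w = π n`.
  refine ⟨1 / 4, by norm_num, ⌈1 + b + 4 * (b * Real.exp b)⌉₊, fun n hn => ?_⟩
  have hn' : 1 + b + 4 * (b * Real.exp b) ≤ n := Nat.ceil_le.mp hn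
  obtain ⟨w, hw⟩ : ∃ w, w = π * n := ⟨_, rfl⟩
  have hnw : (n : ℝ) ≤ w := by
    rw [hw]
    nlinarith [Real.pi_gt_three, (Nat.cast_nonneg n : (0:ℝ) ≤ n)]
  have hw1 : 1 ≤ w := by linarith
  have hwb : b ≤ w := by linarith
  have hsin : Real.sin w = 0 := by rw [hw, mul_comm]; exact Real.sin_nat_mul_pi n
  have hint : (∫ x in (0:ℝ)..1, Real.exp (2 * b * x / 2) * Real.sin (π * n * x) * (1 - x)) =
      ∫ x in (0:ℝ)..1, Real.exp (b * x) * Real.sin (w * x) * (1 - x) := by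
    simp only [hw, mul_assoc, mul_div_cancel_left₀ _ (two_ne_zero' ℝ)]
  have hDeq : (2 * b) ^ 2 / 4 + π ^ 2 * (n : ℝ) ^ 2 = b ^ 2 + w ^ 2 := by rw [hw]; ring
  rw [hint, hDeq, integral_exp_sin_mul_one_sub b w (by linarith) hsin, ge_iff_le]
  have hDpos : 0 < b ^ 2 + w ^ 2 := by positivity
  have hDlarge : 4 * (b * Real.exp b) ≤ b ^ 2 + w ^ 2 := by nlinarith
  have hDsq : b ^ 2 + w ^ 2 ≤ (2 * w) ^ 2 := by nlinarith
  have hsqrt : √(b ^ 2 + w ^ 2) ≤ 2 * w := Real.sqrt_le_iff.mpr ⟨by linarith, hDsq⟩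
  have hcos : b * Real.exp b * Real.cos w ≤ b * Real.exp b :=
    mul_le_of_le_one_right hbe (Real.cos_le_one w)
  generalize b ^ 2 + w ^ 2 = D at *
  have hspos : 0 < √D := Real.sqrt_pos.mpr hDpos
  calc 1 / 4 / √D = √D / (4 * D) := by
        rw [div_div, div_eq_div_iff (by positivity) (by positivity)]
        linear_combination (-4) * Real.mul_self_sqrt hDpos.le
    _ ≤ 2 * w / (4 * D) := by gcongr
    _ = w * D / (2 * D ^ 2) := by field_simp; ring
    _ ≤ (2 * w * D + 4 * b * w * (1 - Real.exp b * Real.cos w)) / (2 * D ^ 2) := by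
        gcongr
        have : 0 ≤ w * (D + 4 * b - 4 * (b * Real.exp b * Real.cos w)) :=
          mul_nonneg (by linarith) (by linarith)
        linarith
    _ = _ := by field_simp; ring
end

section
/- Define G : ℕ → ℝ by G(n) = (π n / √(1 + π² n²)) · (1 − 2(e − 1)/(1 + π² n²)²). Then for every natural number n ≥ 2, G(2) ≤ G(n); that is, G is bounded below on {n : n ≥ 2} by its value at n = 2. -/
/-!
Put `x = πn`. Then `G n` is the product of `x / √(1 + x²)`, which is nonnegative and increasing
in `x ≥ 0`, and `1 - 2(e - 1) / (1 + x²)²`, which is increasing in `x ≥ 0` and already positive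
at `x = 2π`, because `2(e - 1) < 4 < (1 + 4π²)²`. Hence the product is increasing for `n ≥ 2`.
-/

open Real

lemma div_sqrt_one_add_sq_mono {x y : ℝ} (hx : 0 ≤ x) (hxy : x ≤ y) :
    x / √(1 + x ^ 2) ≤ y / √(1 + y ^ 2) := by
  rw [div_le_div_iff₀ (by positivity) (by positivity)]
  have hy : 0 ≤ y := hx.trans hxy
  refine (sq_le_sq₀ (by positivity) (by positivity)).1 ?_
  rw [mul_pow, mul_pow, sq_sqrt (by positivity), sq_sqrt (by positivity)]
  nlinarith [pow_le_pow_left₀ hx hxy 2]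

/-- The sequence `G(n) = (πn/√(1+π²n²))(1 − 2(e−1)/(1+π²n²)²)` is bounded below on
`{n : n ≥ 2}` by its value at `n = 2`. -/
theorem stmt_14 (G : ℕ → ℝ)
    (hG : ∀ n : ℕ, G n = (π * n / Real.sqrt (1 + π ^ 2 * n ^ 2))
        * (1 - 2 * (Real.exp 1 - 1) / (1 + π ^ 2 * n ^ 2) ^ 2)) :
    ∀ n : ℕ, 2 ≤ n → G 2 ≤ G n := by
  intro n hn
  have hn' : ((2 : ℕ) : ℝ) ≤ n := by exact_mod_cast hn
  have hπ : 3 < π := pi_gt_three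
  have he : exp 1 < 2.7182818286 := exp_one_lt_d9
  have he1 : 0 ≤ exp 1 - 1 := by linarith [add_one_le_exp (1 : ℝ)]
  rw [hG, hG]
  simp only [← mul_pow]
  have hx : 6 ≤ π * (2 : ℕ) := by push_cast; linarith
  have hxy : π * (2 : ℕ) ≤ π * n := by gcongr
  generalize π * (2 : ℕ) = x at *
  generalize π * (n : ℝ) = y at *
  have hx0 : 0 ≤ x := by linarith
  refine mul_le_mul (div_sqrt_one_add_sq_mono hx0 hxy) (by gcongr) ?_
    (div_nonneg (hx0.trans hxy) (sqrt_nonneg _))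
  rw [sub_nonneg, div_le_one (by positivity)]
  have h36 : 37 ≤ 1 + x ^ 2 := by nlinarith
  nlinarith
end

section
/- Define F : ℕ → ℝ by F(n) = (π n / √(1 + π² n²)) · (1 − 2(e·(−1)ⁿ − 1)/(1 + π² n²)²) and G : ℕ → ℝ by G(n) = (π n / √(1 + π² n²)) · (1 − 2(e − 1)/(1 + π² n²)²). Then for every natural number n ≥ 1, F(n) ≥ min(F(1), G(2)). -/
open Real

/-!
For `n = 1` the bound is trivial. For `n ≥ 2`, `F n ≥ G n` because `(-1)ⁿ ≤ 1`, and `G` increases on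
`n ≥ 2`: with `t = πn`, both factors `t / √(1 + t²)` and `1 - 2(e - 1) / (1 + t²)²` increase in `t`,
and the second is nonnegative once `2(e - 1) ≤ (1 + t²)²`. `factor_mul_le` combines the two steps by
letting the constant change together with `t`.
-/

lemma div_sqrt_one_add_sq_le {s t : ℝ} (hs : 0 ≤ s) (hst : s ≤ t) :
    s / √(1 + s ^ 2) ≤ t / √(1 + t ^ 2) := by
  have ht : 0 ≤ t := hs.trans hst
  rw [div_le_div_iff₀ (by positivity) (by positivity)]
  refine (sq_le_sq₀ (by positivity) (by positivity)).1 ?_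
  rw [mul_pow, mul_pow, Real.sq_sqrt (by positivity), Real.sq_sqrt (by positivity)]
  nlinarith [pow_le_pow_left₀ hs hst 2]

/-- The product increases when `s` grows to `t` and the constant `c` drops to `c'`, provided the
second factor is nonnegative at `(s, c)`. -/
lemma factor_mul_le {s t c c' : ℝ} (hs : 0 ≤ s) (hst : s ≤ t) (hc : 0 ≤ c) (hcc : c' ≤ c)
    (hcs : c ≤ (1 + s ^ 2) ^ 2) :
    s / √(1 + s ^ 2) * (1 - c / (1 + s ^ 2) ^ 2) ≤
      t / √(1 + t ^ 2) * (1 - c' / (1 + t ^ 2) ^ 2) := by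
  have ht : 0 ≤ t := hs.trans hst
  have h0 : 0 ≤ 1 - c / (1 + s ^ 2) ^ 2 := by
    rw [sub_nonneg, div_le_one (by positivity)]
    exact hcs
  have h1 : c' / (1 + t ^ 2) ^ 2 ≤ c / (1 + s ^ 2) ^ 2 := by gcongr
  exact mul_le_mul (div_sqrt_one_add_sq_le hs hst) (by linarith) h0 (by positivity)

/-- With `F(n) = (πn/√(1+π²n²))(1 − 2(e(−1)ⁿ−1)/(1+π²n²)²)` and
`G(n) = (πn/√(1+π²n²))(1 − 2(e−1)/(1+π²n²)²)`, one has `F(n) ≥ min(F(1), G(2))` for all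
`n ≥ 1`. -/
theorem stmt_16 (F G : ℕ → ℝ)
    (hF : ∀ n : ℕ, F n = (π * n / Real.sqrt (1 + π ^ 2 * n ^ 2))
        * (1 - 2 * (Real.exp 1 * (-1 : ℝ) ^ n - 1) / (1 + π ^ 2 * n ^ 2) ^ 2))
    (hG : ∀ n : ℕ, G n = (π * n / Real.sqrt (1 + π ^ 2 * n ^ 2))
        * (1 - 2 * (Real.exp 1 - 1) / (1 + π ^ 2 * n ^ 2) ^ 2)) :
    ∀ n : ℕ, 1 ≤ n → F n ≥ min (F 1) (G 2) := by
  intro n hn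
  rcases hn.eq_or_lt with rfl | hn
  · exact min_le_left _ _
  · refine (min_le_right _ _).trans ?_
    have hn' : (2 : ℝ) ≤ n := by exact_mod_cast hn
    have he : Real.exp 1 < 3 := Real.exp_one_lt_three
    have he' : 2 ≤ Real.exp 1 := by linarith [Real.add_one_le_exp (1 : ℝ)]
    have hsign : (-1 : ℝ) ^ n ≤ 1 := by
      rcases neg_one_pow_eq_or ℝ n with h | h <;> rw [h] <;> norm_num
    have h2 : π * 2 ≤ π * n := by gcongr
    rw [hF, hG]
    push_cast
    rw [← mul_pow, ← mul_pow]
    refine factor_mul_le (by positivity) h2 (by linarith) (by nlinarith) ?_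
    nlinarith [Real.pi_gt_three]
end
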